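/- arXiv:2412.05906 — 2 statements merged into one kernel-verified Lean document; each statement's English description precedes it below -/
import Mathlib

section
/- Let (Ω, F, ℙ) carry real random variables w_x, w_y with mean 0, variance 1 and E[w_x w_y] = ρ. Fix reals A, B, C, D, Ā, C̄, λ > 0, x, y ∈ ℝ, and a symmetric real 2×2 matrix P with P₁₁ > 0 and B² + D² > 0. Define F₁₁ = (A² + C²) P₁₁, F₁₂ = F₂₁ = (A Ā + ρ C C̄) P₁₂, F₂₂ = (Ā² + C̄²) P₂₂, H = ((A B + C D) P₁₁, (Ā B + ρ C̄ D) P₂₁) ∈ ℝ², and G = (B² + D²) P₁₁ > 0. Then for every probability density π on ℝ with ∫u²π(u)du < ∞ and ∫π|ln π| < ∞, and every random variable u with density π independent of (w_x, w_y), setting X₁ = A x + B u + (C x + D u) w_x and Y₁ = Ā y + C̄ y w_y, one has E[(X₁, Y₁) P (X₁, Y₁)ᵀ] + λ ∫_ℝ π(u) ln π(u) du ≥ (x, y) (F − (1/G) H Hᵀ) (x, y)ᵀ + (λ/2) ln(G/(πλ)), with equality when π is the density of N(−(H·(x, y))/G, λ/(2G)). -/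
open MeasureTheory ProbabilityTheory Matrix

/-- The density of the one-dimensional normal distribution `N(m, v)` (mean `m`,
variance `v`). -/
noncomputable def gaussianDensity (m v : ℝ) : ℝ → ℝ := fun u =>
  (Real.sqrt (2 * Real.pi * v))⁻¹ * Real.exp (-(u - m) ^ 2 / (2 * v))

/-!
Expanding the successor state in the control `u`, which is independent of the noises, turns the
expected cost into `xᵀFx + ∫ (G v² + 2 h v) p(v) dv` with `h = H · x`. What is left is to minimise
the free energy `∫ V p + λ ∫ p log p` of the potential `V v = G v² + 2 h v`. If `q` is the density
with `λ log q = K - V`, then the free energy of `p` is `K + λ ∫ p log (p / q)`, so Gibbs' inequality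
gives the minimum `K` and the minimiser `q`. For this `V`, `q` is Gaussian, and completing the
square gives `K = (λ/2) log (G / (πλ)) - h² / G`; the term `-h² / G` accounts for `-HHᵀ / G`.
-/

section FreeEnergy

variable {α : Type*} [MeasurableSpace α] {ν : Measure α} {V p q : α → ℝ} {t K : ℝ}

/-- The free energy `∫ V p dν + t ∫ p log p dν` of a density `p` in the potential `V` at temperature
`t`; in the control problem `V` is the expected cost as a function of the control and `t` is the
exploration weight. -/
noncomputable def freeEnergy (ν : Measure α) (V : α → ℝ) (t : ℝ) (p : α → ℝ) : ℝ :=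
  ∫ x, V x * p x ∂ν + t * ∫ x, p x * Real.log (p x) ∂ν

lemma sub_le_mul_log_sub_mul_log {a b : ℝ} (ha : 0 ≤ a) (hb : 0 < b) :
    a - b ≤ a * Real.log a - a * Real.log b := by
  rcases ha.eq_or_lt with rfl | ha
  · simpa using hb.le
  · calc a - b = b * (a / b - 1) := by field_simp
      _ ≤ b * (a / b * Real.log (a / b)) := by
        gcongr
        exact Real.self_sub_one_le_mul_log (div_pos ha hb).le
      _ = a * Real.log a - a * Real.log b := by
        rw [Real.log_div ha.ne' hb.ne']
        field_simp

lemma integral_mul_log_le_integral_mul_log (hp0 : 0 ≤ᵐ[ν] p) (hq0 : ∀ᵐ x ∂ν, 0 < q x)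
    (hp : Integrable p ν) (hq : Integrable q ν) (hqp : ∫ x, q x ∂ν ≤ ∫ x, p x ∂ν)
    (hplogp : Integrable (fun x => p x * Real.log (p x)) ν)
    (hplogq : Integrable (fun x => p x * Real.log (q x)) ν) :
    ∫ x, p x * Real.log (q x) ∂ν ≤ ∫ x, p x * Real.log (p x) ∂ν := by
  rw [← sub_nonneg, ← integral_sub hplogp hplogq]
  calc 0 ≤ ∫ x, p x ∂ν - ∫ x, q x ∂ν := sub_nonneg.2 hqp
    _ = ∫ x, (p x - q x) ∂ν := (integral_sub hp hq).symm
    _ ≤ _ := by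
      refine integral_mono_ae (hp.sub hq) (hplogp.sub hplogq) ?_
      filter_upwards [hp0, hq0] with x hpx hqx using sub_le_mul_log_sub_mul_log hpx hqx

lemma mul_integral_mul_log_gibbs (hq : ∀ x, t * Real.log (q x) = K - V x) (hp : Integrable p ν)
    (hp1 : ∫ x, p x ∂ν = 1) (hVp : Integrable (fun x => V x * p x) ν) :
    t * ∫ x, p x * Real.log (q x) ∂ν = K - ∫ x, V x * p x ∂ν :=
  calc t * ∫ x, p x * Real.log (q x) ∂ν = ∫ x, t * (p x * Real.log (q x)) ∂ν :=
        (integral_const_mul _ _).symm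
    _ = ∫ x, (K * p x - V x * p x) ∂ν :=
        integral_congr_ae <| .of_forall fun x => by linear_combination p x * hq x
    _ = K - ∫ x, V x * p x ∂ν := by
        rw [integral_sub (hp.const_mul K) hVp, integral_const_mul, hp1, mul_one]

theorem le_freeEnergy (ht : 0 < t) (hq : ∀ x, t * Real.log (q x) = K - V x)
    (hq0 : ∀ x, 0 < q x) (hqi : Integrable q ν) (hq1 : ∫ x, q x ∂ν = 1)
    (hp0 : 0 ≤ᵐ[ν] p) (hp : Integrable p ν) (hp1 : ∫ x, p x ∂ν = 1)
    (hVp : Integrable (fun x => V x * p x) ν)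
    (hplogp : Integrable (fun x => p x * Real.log (p x)) ν) :
    K ≤ freeEnergy ν V t p := by
  have hplogq : Integrable (fun x => p x * Real.log (q x)) ν := by
    refine (((hp.const_mul K).sub hVp).const_mul t⁻¹).congr (.of_forall fun x => ?_)
    simp only [Pi.sub_apply]
    rw [← sub_mul, ← hq x]
    field_simp
  have hgibbs := integral_mul_log_le_integral_mul_log hp0 (.of_forall hq0) hp hqi
    (hq1.trans hp1.symm).le hplogp hplogq
  calc K = ∫ x, V x * p x ∂ν + t * ∫ x, p x * Real.log (q x) ∂ν := by
        rw [mul_integral_mul_log_gibbs hq hp hp1 hVp]; ring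
    _ ≤ freeEnergy ν V t p := by unfold freeEnergy; gcongr

theorem freeEnergy_gibbs (hq : ∀ x, t * Real.log (q x) = K - V x) (hqi : Integrable q ν)
    (hq1 : ∫ x, q x ∂ν = 1) (hVq : Integrable (fun x => V x * q x) ν) :
    freeEnergy ν V t q = K := by
  rw [freeEnergy, mul_integral_mul_log_gibbs hq hqi hq1 hVq]
  ring

end FreeEnergy

section Law

variable {Ω E : Type*} [MeasurableSpace Ω] [MeasurableSpace E] {μ : Measure Ω} {ν : Measure E}
  {u : Ω → E} {p g : E → ℝ}

lemma integrable_comp_iff_of_map_eq_withDensity (hp : Measurable p) (hp0 : ∀ x, 0 ≤ p x)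
    (hu : Measurable u) (hmap : μ.map u = ν.withDensity fun x => ENNReal.ofReal (p x))
    (hg : Measurable g) :
    Integrable (fun ω => g (u ω)) μ ↔ Integrable (fun x => g x * p x) ν := by
  rw [← Function.comp_def, ← integrable_map_measure hg.aestronglyMeasurable hu.aemeasurable, hmap,
    integrable_withDensity_iff hp.ennreal_ofReal (by simp)]
  simp only [ENNReal.toReal_ofReal (hp0 _)]

lemma integral_comp_of_map_eq_withDensity (hp : Measurable p) (hp0 : ∀ x, 0 ≤ p x)
    (hu : Measurable u) (hmap : μ.map u = ν.withDensity fun x => ENNReal.ofReal (p x))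
    (hg : Measurable g) :
    ∫ ω, g (u ω) ∂μ = ∫ x, g x * p x ∂ν := by
  rw [← integral_map hu.aemeasurable hg.aestronglyMeasurable, hmap,
    integral_withDensity_eq_integral_toReal_smul hp.ennreal_ofReal (by simp)]
  simp only [ENNReal.toReal_ofReal (hp0 _), smul_eq_mul, mul_comm]

end Law

section GaussianDensity

variable {v G t : ℝ}

lemma gaussianDensity_pos (m : ℝ) (hv : 0 < v) (x : ℝ) : 0 < gaussianDensity m v x :=
  gaussianPDFReal_pos m ⟨v, hv.le⟩ x (NNReal.coe_ne_zero.1 hv.ne')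

lemma integrable_gaussianDensity (m : ℝ) (hv : 0 ≤ v) : Integrable (gaussianDensity m v) :=
  integrable_gaussianPDFReal m ⟨v, hv⟩

lemma integral_gaussianDensity_eq_one (m : ℝ) (hv : 0 < v) : ∫ x, gaussianDensity m v x = 1 :=
  integral_gaussianPDFReal_eq_one m (v := ⟨v, hv.le⟩) (NNReal.coe_ne_zero.1 hv.ne')

lemma log_gaussianDensity (m : ℝ) (hv : 0 < v) (x : ℝ) :
    Real.log (gaussianDensity m v x) = -Real.log (2 * Real.pi * v) / 2 - (x - m) ^ 2 / (2 * v) := by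
  rw [gaussianDensity, Real.log_mul (by positivity) (by positivity), Real.log_exp, Real.log_inv,
    Real.log_sqrt (by positivity)]
  ring

lemma integrable_quadratic_mul_gaussianDensity (m : ℝ) (hv : 0 < v) (a b : ℝ) :
    Integrable fun x => (a * x ^ 2 + b * x) * gaussianDensity m v x := by
  lift v to NNReal using hv.le
  have hlaw : (gaussianReal m v).map id
      = volume.withDensity fun x => ENNReal.ofReal (gaussianDensity m v x) := by
    rw [Measure.map_id, gaussianReal_of_var_ne_zero m (NNReal.coe_ne_zero.1 hv.ne')]
    rfl
  have hid : MemLp id 2 (gaussianReal m v) := memLp_id_gaussianReal 2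
  refine (integrable_comp_iff_of_map_eq_withDensity (measurable_gaussianPDFReal m v)
    (fun x => (gaussianDensity_pos m hv x).le) measurable_id hlaw (by fun_prop)).1 ?_
  exact (hid.integrable_sq.const_mul a).add ((hid.integrable one_le_two).const_mul b)

lemma mul_log_gaussianDensity_quadratic (hG : 0 < G) (ht : 0 < t) (h x : ℝ) :
    t * Real.log (gaussianDensity (-h / G) (t / (2 * G)) x)
      = (t / 2 * Real.log (G / (Real.pi * t)) - h ^ 2 / G) - (G * x ^ 2 + 2 * h * x) := by
  have hlog : Real.log (G / (Real.pi * t)) = -Real.log (2 * Real.pi * (t / (2 * G))) := by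
    rw [← Real.log_inv]
    congr 1
    field_simp
  rw [log_gaussianDensity _ (by positivity), hlog]
  field_simp
  ring

theorem le_freeEnergy_quadratic (hG : 0 < G) (ht : 0 < t) (h : ℝ) {p : ℝ → ℝ}
    (hp0 : 0 ≤ᵐ[volume] p) (hp : Integrable p) (hp1 : ∫ x, p x = 1)
    (hVp : Integrable fun x => (G * x ^ 2 + 2 * h * x) * p x)
    (hplogp : Integrable fun x => p x * Real.log (p x)) :
    t / 2 * Real.log (G / (Real.pi * t)) - h ^ 2 / G
      ≤ freeEnergy volume (fun x => G * x ^ 2 + 2 * h * x) t p :=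
  have hv : 0 < t / (2 * G) := by positivity
  le_freeEnergy ht (mul_log_gaussianDensity_quadratic hG ht h) (gaussianDensity_pos _ hv)
    (integrable_gaussianDensity _ hv.le) (integral_gaussianDensity_eq_one _ hv) hp0 hp hp1 hVp
    hplogp

theorem freeEnergy_quadratic_gaussianDensity (hG : 0 < G) (ht : 0 < t) (h : ℝ) :
    freeEnergy volume (fun x => G * x ^ 2 + 2 * h * x) t (gaussianDensity (-h / G) (t / (2 * G)))
      = t / 2 * Real.log (G / (Real.pi * t)) - h ^ 2 / G :=
  have hv : 0 < t / (2 * G) := by positivity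
  freeEnergy_gibbs (mul_log_gaussianDensity_quadratic hG ht h) (integrable_gaussianDensity _ hv.le)
    (integral_gaussianDensity_eq_one _ hv) (integrable_quadratic_mul_gaussianDensity _ hv G (2 * h))

end GaussianDensity

section ExpectedQuadraticForm

variable {Ω ι κ : Type*} [MeasurableSpace Ω] [Fintype ι] [Fintype κ] {μ : Measure Ω}

lemma integrable_dotProduct_mulVec {X : Ω → ι → ℝ} {Y : Ω → κ → ℝ} (hX : MemLp X 2 μ)
    (hY : MemLp Y 2 μ) (P : Matrix ι κ ℝ) : Integrable (fun ω => X ω ⬝ᵥ P *ᵥ Y ω) μ := by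
  have hPY (i : ι) : MemLp (fun ω => (P *ᵥ Y ω) i) 2 μ :=
    memLp_finsetSum _ fun j _ => (memLp_pi_iff.1 hY j).const_mul (P i j)
  exact integrable_finsetSum _ fun i _ => (memLp_pi_iff.1 hX i).integrable_mul (hPY i)

lemma integral_dotProduct_mulVec {X : Ω → ι → ℝ} {Y : Ω → κ → ℝ} (hX : MemLp X 2 μ)
    (hY : MemLp Y 2 μ) (P : Matrix ι κ ℝ) :
    ∫ ω, X ω ⬝ᵥ P *ᵥ Y ω ∂μ = ∑ i, ∑ j, P i j * ∫ ω, X ω i * Y ω j ∂μ := by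
  have hXY (i : ι) (j : κ) : Integrable (fun ω => P i j * (X ω i * Y ω j)) μ :=
    ((memLp_pi_iff.1 hX i).integrable_mul (memLp_pi_iff.1 hY j)).const_mul (P i j)
  simp only [mulVec, dotProduct, Finset.mul_sum, mul_left_comm (X _ _)]
  rw [integral_finsetSum _ fun i _ => integrable_finsetSum _ fun j _ => hXY i j]
  simp only [integral_finsetSum _ fun j _ => hXY _ j, integral_const_mul]

lemma integral_affine_mul_affine [IsProbabilityMeasure μ] {ξ η : Ω → ℝ} (hξ : MemLp ξ 2 μ)
    (hη : MemLp η 2 μ) (hξ0 : ∫ ω, ξ ω ∂μ = 0) (hη0 : ∫ ω, η ω ∂μ = 0) (a b c d : ℝ) :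
    ∫ ω, (a + c * ξ ω) * (b + d * η ω) ∂μ = a * b + c * d * ∫ ω, ξ ω * η ω ∂μ := by
  have hξ1 : Integrable (fun ω => c * b * ξ ω) μ := (hξ.integrable one_le_two).const_mul _
  have hη1 : Integrable (fun ω => a * d * η ω) μ := (hη.integrable one_le_two).const_mul _
  have hξη : Integrable (fun ω => c * d * (ξ ω * η ω)) μ := (hξ.integrable_mul hη).const_mul _
  calc ∫ ω, (a + c * ξ ω) * (b + d * η ω) ∂μ
      = ∫ ω, (a * b + c * b * ξ ω + a * d * η ω + c * d * (ξ ω * η ω)) ∂μ := by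
        congr with ω; ring
    _ = a * b + c * d * ∫ ω, ξ ω * η ω ∂μ := by
        rw [integral_add (by fun_prop) hξη, integral_add (by fun_prop) hη1,
          integral_add (by fun_prop) hξ1]
        simp [integral_const_mul, hξ0, hη0]

variable {w : Ω → ι → ℝ} {R : Matrix ι ι ℝ}

lemma memLp_const_add_const_mul [IsFiniteMeasure μ] (hw : MemLp w 2 μ) (a c : ι → ℝ) :
    MemLp (fun ω => a + c * w ω) 2 μ :=
  (memLp_const a).add (memLp_pi_iff.2 fun i => (memLp_pi_iff.1 hw i).const_mul (c i))

lemma integral_affine_dotProduct_mulVec_affine [IsProbabilityMeasure μ] (hw : MemLp w 2 μ)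
    (hw0 : ∀ i, ∫ ω, w ω i ∂μ = 0) (hR : ∀ i j, ∫ ω, w ω i * w ω j ∂μ = R i j)
    (P : Matrix ι ι ℝ) (a b c d : ι → ℝ) :
    ∫ ω, (a + c * w ω) ⬝ᵥ P *ᵥ (b + d * w ω) ∂μ = a ⬝ᵥ P *ᵥ b + c ⬝ᵥ (P ⊙ R) *ᵥ d := by
  have hcomp := memLp_pi_iff.1 hw
  rw [integral_dotProduct_mulVec (memLp_const_add_const_mul hw a c)
    (memLp_const_add_const_mul hw b d)]
  simp only [Pi.add_apply, Pi.mul_apply,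
    integral_affine_mul_affine (hcomp _) (hcomp _) (hw0 _) (hw0 _), hR]
  simp only [mulVec, dotProduct, hadamard_apply, Finset.mul_sum, ← Finset.sum_add_distrib]
  congr! 2 with i _ j _
  ring

lemma measurable_dotProduct_mulVec (P : Matrix ι κ ℝ) :
    Measurable fun z : (ι → ℝ) × (κ → ℝ) => z.1 ⬝ᵥ P *ᵥ z.2 := by
  simp only [mulVec, dotProduct]
  fun_prop

lemma integral_add_mul_add_sq_mul_of_indepFun [IsFiniteMeasure μ] {u f g h : Ω → ℝ}
    (hu : MemLp u 2 μ) (hf : Integrable f μ) (hg : Integrable g μ) (hh : Integrable h μ)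
    (hug : IndepFun u g μ) (huh : IndepFun u h μ) :
    ∫ ω, (f ω + u ω * g ω + u ω ^ 2 * h ω) ∂μ
      = ∫ ω, f ω ∂μ + (∫ ω, u ω ∂μ) * ∫ ω, g ω ∂μ + (∫ ω, u ω ^ 2 ∂μ) * ∫ ω, h ω ∂μ := by
  have hu1 : Integrable u μ := hu.integrable one_le_two
  have hu2 : Integrable (fun ω => u ω ^ 2) μ := hu.integrable_sq
  have hu2h : IndepFun (fun ω => u ω ^ 2) h μ := huh.comp (measurable_id.pow_const 2) measurable_id
  have hug_int : Integrable (fun ω => u ω * g ω) μ := hug.integrable_mul hu1 hg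
  have huh_int : Integrable (fun ω => u ω ^ 2 * h ω) μ := hu2h.integrable_mul hu2 hh
  rw [integral_add (by fun_prop) huh_int, integral_add hf hug_int,
    hug.integral_fun_mul_eq_mul_integral hu1.1 hg.1,
    hu2h.integral_fun_mul_eq_mul_integral hu2.1 hh.1]

lemma integral_dotProduct_mulVec_add_smul [IsFiniteMeasure μ] {u : Ω → ℝ} {X Y : Ω → ι → ℝ}
    (hu : MemLp u 2 μ) (hX : MemLp X 2 μ) (hY : MemLp Y 2 μ)
    (hind : IndepFun u (fun ω => (X ω, Y ω)) μ) (P : Matrix ι ι ℝ) :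
    ∫ ω, (X ω + u ω • Y ω) ⬝ᵥ P *ᵥ (X ω + u ω • Y ω) ∂μ
      = ∫ ω, X ω ⬝ᵥ P *ᵥ X ω ∂μ
        + (∫ ω, u ω ∂μ) * (∫ ω, X ω ⬝ᵥ P *ᵥ Y ω ∂μ + ∫ ω, Y ω ⬝ᵥ P *ᵥ X ω ∂μ)
        + (∫ ω, u ω ^ 2 ∂μ) * ∫ ω, Y ω ⬝ᵥ P *ᵥ Y ω ∂μ := by
  have hP := measurable_dotProduct_mulVec P
  have hXY := integrable_dotProduct_mulVec hX hY P
  have hYX := integrable_dotProduct_mulVec hY hX P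
  have hcross : Integrable (fun ω => X ω ⬝ᵥ P *ᵥ Y ω + Y ω ⬝ᵥ P *ᵥ X ω) μ := hXY.add hYX
  rw [← integral_add hXY hYX, ← integral_add_mul_add_sq_mul_of_indepFun hu
    (integrable_dotProduct_mulVec hX hX P) hcross (integrable_dotProduct_mulVec hY hY P)
    (hind.comp measurable_id (hP.add (hP.comp measurable_swap)))
    (hind.comp measurable_id (hP.comp (measurable_snd.prodMk measurable_snd)))]
  congr with ω
  simp only [mulVec_add, mulVec_smul, add_dotProduct, dotProduct_add, smul_dotProduct,
    dotProduct_smul, smul_eq_mul]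
  ring

/-- The successor state of linear dynamics under the scalar control `u` and the noise vector `w`,
which acts componentwise: `c * w` and `d * w` are pointwise products. The coefficients `a` and `c`
carry the current state; `b` and `d` are the drift and volatility responses to the control. -/
def nextState (a b c d w : ι → ℝ) (u : ℝ) : ι → ℝ :=
  a + c * w + u • (b + d * w)

theorem integral_dotProduct_mulVec_nextState [IsProbabilityMeasure μ] {u : Ω → ℝ}
    (hw : MemLp w 2 μ) (hw0 : ∀ i, ∫ ω, w ω i ∂μ = 0)
    (hR : ∀ i j, ∫ ω, w ω i * w ω j ∂μ = R i j) (hu : MemLp u 2 μ) (hind : IndepFun u w μ)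
    (P : Matrix ι ι ℝ) (a b c d : ι → ℝ) :
    ∫ ω, nextState a b c d (w ω) (u ω) ⬝ᵥ P *ᵥ nextState a b c d (w ω) (u ω) ∂μ
      = (a ⬝ᵥ P *ᵥ a + c ⬝ᵥ (P ⊙ R) *ᵥ c)
        + (∫ ω, u ω ∂μ)
          * ((a ⬝ᵥ P *ᵥ b + c ⬝ᵥ (P ⊙ R) *ᵥ d) + (b ⬝ᵥ P *ᵥ a + d ⬝ᵥ (P ⊙ R) *ᵥ c))
        + (∫ ω, u ω ^ 2 ∂μ) * (b ⬝ᵥ P *ᵥ b + d ⬝ᵥ (P ⊙ R) *ᵥ d) := by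
  have hind' : IndepFun u (fun ω => (a + c * w ω, b + d * w ω)) μ :=
    hind.comp (ψ := fun z => (a + c * z, b + d * z)) measurable_id (by fun_prop)
  simp only [nextState]
  rw [integral_dotProduct_mulVec_add_smul hu (memLp_const_add_const_mul hw a c)
    (memLp_const_add_const_mul hw b d) hind' P]
  simp only [integral_affine_dotProduct_mulVec_affine hw hw0 hR]

end ExpectedQuadraticForm

lemma dotProduct_sub_smul_vecMulVec_mulVec {n R : Type*} [Fintype n] [CommRing R]
    (M : Matrix n n R) (r : R) (v x : n → R) :
    x ⬝ᵥ (M - r • vecMulVec v v) *ᵥ x = x ⬝ᵥ M *ᵥ x - r * (v ⬝ᵥ x) ^ 2 := by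
  simp only [sub_mulVec, smul_mulVec, vecMulVec_mulVec, dotProduct_sub, dotProduct_smul,
    op_smul_eq_smul, smul_eq_mul, dotProduct_comm x v]
  ring

theorem integral_cost_eq_add_integral_quadratic_control {Ω : Type*} [MeasurableSpace Ω]
    {μ : Measure Ω} [IsProbabilityMeasure μ] {wx wy u : Ω → ℝ} {ρ : ℝ}
    {P : Matrix (Fin 2) (Fin 2) ℝ} (hwx : MemLp wx 2 μ) (hwy : MemLp wy 2 μ)
    (hwx0 : ∫ ω, wx ω ∂μ = 0) (hwy0 : ∫ ω, wy ω ∂μ = 0)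
    (hwxv : ∫ ω, wx ω ^ 2 ∂μ = 1) (hwyv : ∫ ω, wy ω ^ 2 ∂μ = 1) (hρ : ∫ ω, wx ω * wy ω ∂μ = ρ)
    (hu : MemLp u 2 μ) (hind : IndepFun u (fun ω => (wx ω, wy ω)) μ) (hP : P.IsSymm)
    (A B C D Abar Cbar x y : ℝ) :
    ∫ ω, ![A * x + B * u ω + (C * x + D * u ω) * wx ω, Abar * y + Cbar * y * wy ω] ⬝ᵥ
        (P *ᵥ ![A * x + B * u ω + (C * x + D * u ω) * wx ω, Abar * y + Cbar * y * wy ω]) ∂μ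
      = ![x, y] ⬝ᵥ (!![(A ^ 2 + C ^ 2) * P 0 0, (A * Abar + ρ * C * Cbar) * P 0 1;
            (A * Abar + ρ * C * Cbar) * P 0 1, (Abar ^ 2 + Cbar ^ 2) * P 1 1] *ᵥ ![x, y])
        + ∫ ω, ((B ^ 2 + D ^ 2) * P 0 0 * u ω ^ 2
          + 2 * (![(A * B + C * D) * P 0 0, (Abar * B + ρ * Cbar * D) * P 1 0] ⬝ᵥ ![x, y])
            * u ω) ∂μ := by
  have hw : MemLp (fun ω => ![wx ω, wy ω]) 2 μ := by
    rw [memLp_pi_iff, Fin.forall_fin_two]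
    exact ⟨hwx, hwy⟩
  have hindw : IndepFun u (fun ω => ![wx ω, wy ω]) μ :=
    hind.comp measurable_id (MeasurableEquiv.finTwoArrow (α := ℝ)).symm.measurable
  have hR : ∀ i j, ∫ ω, ![wx ω, wy ω] i * ![wx ω, wy ω] j ∂μ = !![1, ρ; ρ, 1] i j := by
    simp [Fin.forall_fin_two, ← sq, hwxv, hwyv, hρ, mul_comm (wy _)]
  have hexpand := integral_dotProduct_mulVec_nextState hw
    (by simp [Fin.forall_fin_two, hwx0, hwy0]) hR hu hindw P
    ![A * x, Abar * y] ![B, 0] ![C * x, Cbar * y] ![D, 0]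
  have hstate (ω : Ω) :
      ![A * x + B * u ω + (C * x + D * u ω) * wx ω, Abar * y + Cbar * y * wy ω]
        = nextState ![A * x, Abar * y] ![B, 0] ![C * x, Cbar * y] ![D, 0] ![wx ω, wy ω] (u ω) := by
    ext i
    simp only [nextState, Pi.add_apply, Pi.mul_apply, Pi.smul_apply, smul_eq_mul]
    fin_cases i
    · simp only [Fin.zero_eta, cons_val_zero]
      ring
    · simp
  simp only [hstate]
  rw [hexpand, integral_add (hu.integrable_sq.const_mul _)
    ((hu.integrable one_le_two).const_mul _), integral_const_mul, integral_const_mul]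
  simp only [dotProduct, mulVec, Fin.sum_univ_two, cons_val_zero, cons_val_one, cons_val_fin_one,
    cons_val', of_apply, hadamard_apply, hP.apply 0 1, mul_one, mul_zero, zero_mul, add_zero]
  ring

/-- One-step Bellman verification for the exploratory LQ problem (scalar control):
with `F`, `H`, `G` built from the symmetric matrix `P` as in the Riccati step, every
admissible control density `p` (and control `u` with density `p` independent of the
noises) satisfies
`E[(X₁,Y₁)P(X₁,Y₁)ᵀ] + λ∫p ln p ≥ (x,y)(F − (1/G)HHᵀ)(x,y)ᵀ + (λ/2)ln(G/(πλ))`,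
with equality when `p` is the density of `N(−(H·(x,y))/G, λ/(2G))`. -/
theorem stmt_9 {Ω : Type*} [MeasurableSpace Ω] (μ : Measure Ω) [IsProbabilityMeasure μ]
    (wx wy : Ω → ℝ) (hwxm : Measurable wx) (hwym : Measurable wy)
    (hwx2 : Integrable (fun ω => wx ω ^ 2) μ) (hwy2 : Integrable (fun ω => wy ω ^ 2) μ)
    (hwx0 : ∫ ω, wx ω ∂μ = 0) (hwy0 : ∫ ω, wy ω ∂μ = 0)
    (hwxv : ∫ ω, wx ω ^ 2 ∂μ = 1) (hwyv : ∫ ω, wy ω ^ 2 ∂μ = 1)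
    (ρ : ℝ) (hρ : ∫ ω, wx ω * wy ω ∂μ = ρ)
    (A B C D Abar Cbar lam x y : ℝ) (hlam : 0 < lam)
    (P : Matrix (Fin 2) (Fin 2) ℝ) (hPsymm : P.IsSymm)
    (hP11 : 0 < P 0 0) (hBD : 0 < B ^ 2 + D ^ 2)
    (F : Matrix (Fin 2) (Fin 2) ℝ)
    (hF : F = !![(A ^ 2 + C ^ 2) * P 0 0, (A * Abar + ρ * C * Cbar) * P 0 1;
                 (A * Abar + ρ * C * Cbar) * P 0 1, (Abar ^ 2 + Cbar ^ 2) * P 1 1])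
    (H : Fin 2 → ℝ)
    (hH : H = ![(A * B + C * D) * P 0 0, (Abar * B + ρ * Cbar * D) * P 1 0])
    (G : ℝ) (hG : G = (B ^ 2 + D ^ 2) * P 0 0) :
    ∀ p : ℝ → ℝ, Measurable p → (∀ v, 0 ≤ p v) → (∫ v, p v) = 1 →
      Integrable (fun v => v ^ 2 * p v) →
      Integrable (fun v => p v * |Real.log (p v)|) →
      ∀ u : Ω → ℝ, Measurable u →
        Measure.map u μ = volume.withDensity (fun v => ENNReal.ofReal (p v)) →
        IndepFun u (fun ω => (wx ω, wy ω)) μ →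
        ((∫ ω, ![A * x + B * u ω + (C * x + D * u ω) * wx ω,
                 Abar * y + Cbar * y * wy ω] ⬝ᵥ
              (P *ᵥ ![A * x + B * u ω + (C * x + D * u ω) * wx ω,
                      Abar * y + Cbar * y * wy ω]) ∂μ)
            + lam * ∫ v, p v * Real.log (p v)
          ≥ ![x, y] ⬝ᵥ ((F - (1 / G) • vecMulVec H H) *ᵥ ![x, y])
            + (lam / 2) * Real.log (G / (Real.pi * lam)))
        ∧ (p = gaussianDensity (-(H ⬝ᵥ ![x, y]) / G) (lam / (2 * G)) →
            (∫ ω, ![A * x + B * u ω + (C * x + D * u ω) * wx ω,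
                    Abar * y + Cbar * y * wy ω] ⬝ᵥ
                (P *ᵥ ![A * x + B * u ω + (C * x + D * u ω) * wx ω,
                        Abar * y + Cbar * y * wy ω]) ∂μ)
              + lam * ∫ v, p v * Real.log (p v)
            = ![x, y] ⬝ᵥ ((F - (1 / G) • vecMulVec H H) *ᵥ ![x, y])
              + (lam / 2) * Real.log (G / (Real.pi * lam))) := by
  intro p hp hp0 hp1 hp2 hpl u hu hmap hind
  have hG0 : 0 < G := by rw [hG]; positivity
  have hpi : Integrable p := integrable_of_integral_eq_one hp1
  have hplogp : Integrable fun v => p v * Real.log (p v) := by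
    refine (integrable_norm_iff (by fun_prop)).1 (hpl.congr (.of_forall fun v => ?_))
    simp [abs_of_nonneg (hp0 v)]
  have hu2 : MemLp u 2 μ := (memLp_two_iff_integrable_sq hu.aestronglyMeasurable).2 <|
    (integrable_comp_iff_of_map_eq_withDensity (g := (· ^ 2)) hp hp0 hu hmap (by fun_prop)).2 hp2
  have hV : Measurable fun v => G * v ^ 2 + 2 * (H ⬝ᵥ ![x, y]) * v := by fun_prop
  have hVp := (integrable_comp_iff_of_map_eq_withDensity hp hp0 hu hmap hV).1 <|
    (hu2.integrable_sq.const_mul _).add ((hu2.integrable one_le_two).const_mul _)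
  have hcost := integral_cost_eq_add_integral_quadratic_control
    ((memLp_two_iff_integrable_sq hwxm.aestronglyMeasurable).2 hwx2)
    ((memLp_two_iff_integrable_sq hwym.aestronglyMeasurable).2 hwy2)
    hwx0 hwy0 hwxv hwyv hρ hu2 hind hPsymm A B C D Abar Cbar x y
  rw [← hF, ← hH, ← hG, integral_comp_of_map_eq_withDensity hp hp0 hu hmap hV] at hcost
  rw [hcost, dotProduct_sub_smul_vecMulVec_mulVec, one_div_mul_eq_div]
  constructor
  · have hmin := le_freeEnergy_quadratic hG0 hlam (H ⬝ᵥ ![x, y]) (.of_forall hp0) hpi hp1 hVp hplogp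
    rw [freeEnergy] at hmin
    linarith
  · rintro rfl
    have hmin := freeEnergy_quadratic_gaussianDensity hG0 hlam (H ⬝ᵥ ![x, y])
    rw [freeEnergy] at hmin
    linarith
end

section
/- In the backward Riccati recursion context, for every t with 0 ≤ t ≤ T one has (P_t)₁₂ = (P_t)₂₁ = −q^{T−t}. -/
open Matrix

/-!
Dividing `H Hᵀ` by `G`, which is linear in `P₁₁`, cancels the factor `P₁₁` in the first row and
column. So on symmetric matrices with `P₁₁ ≠ 0` the quadratic recursion acts on `P₁₁` as
multiplication by `r` and on `P₁₂` as multiplication by `q`. As `r ≠ 0`, the condition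
`P₁₁ ≠ 0` persists, and `P₁₂` is a geometric sequence.
-/

section RiccatiStep

variable {K : Type*} [Field K]

/-- One backward step `P ↦ F - (1 / G) H Hᵀ` of the `2 × 2` Riccati recursion with a scalar control.
Here `a, b, c` are the coefficients of `F`, `g` is that of `G`, and `u, v` are those of `H`; in the
paper's notation `a = A² + C²`, `b = AĀ + CC̄`, `c = Ā² + C̄²`, `g = B² + D²`, `u = AB + CD` and
`v = ĀB + ρC̄D`. -/
def riccatiStep (a b c g u v : K) (P : Matrix (Fin 2) (Fin 2) K) : Matrix (Fin 2) (Fin 2) K :=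
  !![a * P 0 0, b * P 0 1; b * P 0 1, c * P 1 1] -
    (1 / (g * P 0 0)) • vecMulVec ![u * P 0 0, v * P 1 0] ![u * P 0 0, v * P 1 0]

variable {a b c g u v : K} {P : Matrix (Fin 2) (Fin 2) K}

theorem isSymm_riccatiStep : (riccatiStep a b c g u v P).IsSymm := by
  have hF : !![a * P 0 0, b * P 0 1; b * P 0 1, c * P 1 1].IsSymm :=
    IsSymm.ext_iff.2 (by simp [Fin.forall_fin_two])
  exact hF.sub (IsSymm.smul (transpose_vecMulVec _ _) _)

theorem riccatiStep_apply_zero_zero (hg : g ≠ 0) (hP : P 0 0 ≠ 0) :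
    riccatiStep a b c g u v P 0 0 = (a - u ^ 2 / g) * P 0 0 :=
  calc
    riccatiStep a b c g u v P 0 0
      = a * P 0 0 - 1 / (g * P 0 0) * (u * P 0 0 * (u * P 0 0)) := rfl
    _ = (a - u ^ 2 / g) * P 0 0 := by field_simp

theorem riccatiStep_apply_zero_one (hg : g ≠ 0) (hP : P 0 0 ≠ 0) (hsymm : P.IsSymm) :
    riccatiStep a b c g u v P 0 1 = (b - v * u / g) * P 0 1 :=
  calc
    riccatiStep a b c g u v P 0 1
      = b * P 0 1 - 1 / (g * P 0 0) * (u * P 0 0 * (v * P 1 0)) := rfl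
    _ = b * P 0 1 - 1 / (g * P 0 0) * (u * P 0 0 * (v * P 0 1)) := by rw [hsymm.apply 0 1]
    _ = (b - v * u / g) * P 0 1 := by field_simp

theorem isSymm_iterate_riccatiStep (hsymm : P.IsSymm) (n : ℕ) :
    ((riccatiStep a b c g u v)^[n] P).IsSymm :=
  Function.Iterate.rec IsSymm hsymm (fun _ _ => isSymm_riccatiStep) n

theorem iterate_riccatiStep_apply_zero_zero_ne_zero (hg : g ≠ 0) (hr : a - u ^ 2 / g ≠ 0)
    (hP : P 0 0 ≠ 0) (n : ℕ) : (riccatiStep a b c g u v)^[n] P 0 0 ≠ 0 :=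
  Function.Iterate.rec (fun Q : Matrix (Fin 2) (Fin 2) K => Q 0 0 ≠ 0)
    hP (fun _ hQ => riccatiStep_apply_zero_zero hg hQ ▸ mul_ne_zero hr hQ) n

theorem iterate_riccatiStep_apply_zero_one (hg : g ≠ 0) (hr : a - u ^ 2 / g ≠ 0)
    (hP : P 0 0 ≠ 0) (hsymm : P.IsSymm) (n : ℕ) :
    (riccatiStep a b c g u v)^[n] P 0 1 = (b - v * u / g) ^ n * P 0 1 := by
  induction n with
  | zero => simp
  | succ n ih =>
    rw [Function.iterate_succ_apply', riccatiStep_apply_zero_one hg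
      (iterate_riccatiStep_apply_zero_zero_ne_zero hg hr hP n)
      (isSymm_iterate_riccatiStep hsymm n), ih, pow_succ', mul_assoc]

end RiccatiStep

theorem eq_iterate_sub_of_eq_apply_succ {α : Type*} {f : α → α} {x : ℕ → α} {T : ℕ}
    (hx : ∀ t < T, x t = f (x (t + 1))) {t : ℕ} (ht : t ≤ T) : x t = f^[T - t] (x T) := by
  induction ht using Nat.decreasingInduction with
  | self => simp
  | of_succ t ht ih =>
    rw [hx t ht, ih, show T - t = (T - (t + 1)).succ by lia, Function.iterate_succ_apply']

theorem stmt_11_general {K : Type*} [Field K] {a b c g u v : K} {T : ℕ}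
    {P : ℕ → Matrix (Fin 2) (Fin 2) K} (hg : g ≠ 0) (hr : a - u ^ 2 / g ≠ 0)
    (hPT : P T 0 0 ≠ 0) (hsymm : (P T).IsSymm)
    (hrec : ∀ t < T, P t = riccatiStep a b c g u v (P (t + 1))) {t : ℕ} (ht : t ≤ T) :
    P t 0 1 = (b - v * u / g) ^ (T - t) * P T 0 1 ∧
      P t 1 0 = (b - v * u / g) ^ (T - t) * P T 0 1 := by
  have hupper : P t 0 1 = (b - v * u / g) ^ (T - t) * P T 0 1 := by
    rw [eq_iterate_sub_of_eq_apply_succ hrec ht,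
      iterate_riccatiStep_apply_zero_one hg hr hPT hsymm]
  have hPt : (P t).IsSymm :=
    eq_iterate_sub_of_eq_apply_succ hrec ht ▸ isSymm_iterate_riccatiStep hsymm (T - t)
  exact ⟨hupper, (hPt.apply 0 1).trans hupper⟩

/-- In the backward Riccati recursion `P_T = [[1,−1],[−1,1]]`,
`P_t = F_t − (1/G_t) H_t H_tᵀ`, the off-diagonal entries satisfy
`(P_t)₁₂ = (P_t)₂₁ = −q^{T−t}` for all `0 ≤ t ≤ T`, where
`q = AĀ + CC̄ − (ĀB + ρC̄D)(AB + CD)/(B² + D²)`. -/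
theorem stmt_11 (T : ℕ) (A B C D Abar Cbar ρ r q : ℝ)
    (hBD : 0 < B ^ 2 + D ^ 2)
    (hr : r = A ^ 2 + C ^ 2 - (A * B + C * D) ^ 2 / (B ^ 2 + D ^ 2))
    (hrpos : 0 < r)
    (hq : q = A * Abar + C * Cbar
            - (Abar * B + ρ * Cbar * D) * (A * B + C * D) / (B ^ 2 + D ^ 2))
    (P : ℕ → Matrix (Fin 2) (Fin 2) ℝ)
    (hPT : P T = !![1, -1; -1, 1])
    (hrec : ∀ t, t < T →
      P t = !![(A ^ 2 + C ^ 2) * P (t + 1) 0 0,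
               (A * Abar + C * Cbar) * P (t + 1) 0 1;
               (A * Abar + C * Cbar) * P (t + 1) 0 1,
               (Abar ^ 2 + Cbar ^ 2) * P (t + 1) 1 1]
            - (1 / ((B ^ 2 + D ^ 2) * P (t + 1) 0 0)) •
                vecMulVec
                  ![(A * B + C * D) * P (t + 1) 0 0,
                    (Abar * B + ρ * Cbar * D) * P (t + 1) 1 0]
                  ![(A * B + C * D) * P (t + 1) 0 0,
                    (Abar * B + ρ * Cbar * D) * P (t + 1) 1 0]) :
    ∀ t, t ≤ T → P t 0 1 = -q ^ (T - t) ∧ P t 1 0 = -q ^ (T - t) := by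
  intro t ht
  have hsymm : (P T).IsSymm := hPT ▸ IsSymm.ext_iff.2 (by simp [Fin.forall_fin_two])
  simpa [hPT, hq] using
    stmt_11_general hBD.ne' (hr ▸ hrpos.ne') (by simp [hPT]) hsymm hrec ht
end
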